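/- arXiv:1201.0484 — 2 statements merged into one kernel-verified Lean document; each statement's English description precedes it below -/
import Mathlib

section
/- Let q be a prime power and let S be a set without tangents in PG(2,q) of size q + k. Suppose the line L∞ contains exactly k points of S. Then the set A = S \ L∞ consists of exactly q affine points, and S ∩ L∞ equals the set of points of L∞ that are NOT directions determined by A (equivalently, S ∩ L∞ = L∞ \ D, where D is the set of directions determined by A). -/
/-!
`PG(2,F)`: points are the 1-dimensional subspaces of `F^3` (modelled as the
projectivization of `Fin 3 → F`), lines are the 2-dimensional subspaces.
-/

variable {F : Type*} [Field F]

/-- The points of `PG(2,F)`: 1-dimensional subspaces of `F^3`. -/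
abbrev PGPoint (F : Type*) [Field F] := Projectivization F (Fin 3 → F)

/-- A line of `PG(2,F)` is a 2-dimensional subspace of `F^3`. -/
def IsProjLine (F : Type*) [Field F] (L : Submodule F (Fin 3 → F)) : Prop :=
  Module.finrank F L = 2

/-- The set of projective points lying on the subspace `L`. -/
def pointsOn (L : Submodule F (Fin 3 → F)) : Set (PGPoint F) :=
  {P | P.submodule ≤ L}

/-- `S` is a set without tangents: no line of `PG(2,F)` meets `S` in exactly one point. -/
def NoTangents (S : Set (PGPoint F)) : Prop :=
  ∀ L : Submodule F (Fin 3 → F), IsProjLine F L →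
    ¬ (∃! P : PGPoint F, P ∈ S ∩ pointsOn L)

/-- The line at infinity `Z = 0` of `PG(2,F)`. -/
def Linf (F : Type*) [Field F] : Submodule F (Fin 3 → F) :=
  LinearMap.ker (LinearMap.proj 2 : (Fin 3 → F) →ₗ[F] F)

/-- The set of directions (points of the line at infinity) determined by a set `A`
of affine points: for distinct `⟨(x₁,y₁,1)⟩`, `⟨(x₂,y₂,1)⟩` in `A` the determined
direction is `⟨(x₁-x₂, y₁-y₂, 0)⟩` (which is `⟨(1,(y₁-y₂)/(x₁-x₂),0)⟩` if `x₁ ≠ x₂`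
and `⟨(0,1,0)⟩` if `x₁ = x₂`). -/
def dirs (A : Set (PGPoint F)) : Set (PGPoint F) :=
  {d | ∃ P1 ∈ A, ∃ P2 ∈ A, P1 ≠ P2 ∧ ∃ x1 y1 x2 y2 : F,
    P1.submodule = Submodule.span F {![x1, y1, 1]} ∧
    P2.submodule = Submodule.span F {![x2, y2, 1]} ∧
    d.submodule = Submodule.span F {![x1 - x2, y1 - y2, 0]}}

/-!
Let `S` be a set without tangents in a projective space over a field with `q` elements, and let
`P ∈ S` be a point of a proper subspace `H` of projective dimension `n`.
Every line through `P` not contained in `H` meets `S` again, necessarily outside `H`. There are at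
least `q ^ n` such lines, so if `S` has only `q ^ n` points outside `H`, each of the lines contains
exactly one of them, and no secant of `S \ H` passes through `P`. Conversely, for a point `P` of `H`
outside `S`, the line joining `P` to any point of `S \ H` is not a tangent, hence is a secant of
`S \ H`. Finally, a secant of an affine set meets the line at infinity in the direction of the
secant.
-/

open Module Projectivization
open scoped LinearAlgebra.Projectivization

section ProjectiveSpace

variable {V : Type*} [AddCommGroup V] [Module F V] {P Q R : ℙ F V} {H : Submodule F V}

/-- The sets without tangents of an arbitrary projective space; for `V = Fin 3 → F` this is
`NoTangents`. Lines are encoded as 2-dimensional subspaces of `V`. -/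
def IsTangentFree (S : Set (ℙ F V)) : Prop :=
  ∀ L : Submodule F V, finrank F L = 2 → ¬ ∃! P : ℙ F V, P ∈ S ∩ L.projectivization

/-- The union of the secants of `A`, that is, of the lines joining two distinct points of `A`. It
is the coordinate-free counterpart of `dirs`, before intersecting with the line at infinity. -/
def secantPoints (A : Set (ℙ F V)) : Set (ℙ F V) :=
  {P | ∃ Q ∈ A, ∃ R ∈ A, Q ≠ R ∧ P.submodule ≤ Q.submodule ⊔ R.submodule}

lemma isAtom_submodule (P : ℙ F V) : IsAtom P.submodule := by
  rw [P.submodule_eq]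
  exact nonzero_span_atom P.rep P.rep_nonzero

lemma submodule_le_submodule_iff : P.submodule ≤ Q.submodule ↔ P = Q := by
  rw [(isAtom_submodule Q).le_iff_eq (isAtom_submodule P).1, submodule_injective.eq_iff]

lemma finrank_submodule_sup_submodule (hPQ : P ≠ Q) :
    finrank F ↥(P.submodule ⊔ Q.submodule) = 2 := by
  have h_disjoint : Disjoint P.submodule Q.submodule :=
    (isAtom_submodule P).disjoint_of_ne (isAtom_submodule Q) (submodule_injective.ne hPQ)
  have h := Submodule.finrank_sup_add_finrank_inf_eq P.submodule Q.submodule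
  rwa [h_disjoint.eq_bot, finrank_bot, P.finrank_submodule, Q.finrank_submodule] at h

lemma submodule_sup_eq_of_le_sup (hRP : R ≠ P) (hR : R.submodule ≤ P.submodule ⊔ Q.submodule) :
    P.submodule ⊔ R.submodule = P.submodule ⊔ Q.submodule := by
  have hPQ : P ≠ Q := by
    rintro rfl
    exact hRP (submodule_le_submodule_iff.mp (by rwa [sup_idem] at hR))
  refine Submodule.eq_of_le_of_finrank_eq (sup_le le_sup_left hR) ?_
  rw [finrank_submodule_sup_submodule hRP.symm, finrank_submodule_sup_submodule hPQ]

lemma submodule_sup_inf_eq_left (hP : P ∈ H.projectivization) (hQ : Q ∉ H.projectivization) :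
    (P.submodule ⊔ Q.submodule) ⊓ H = P.submodule := by
  rw [Submodule.mem_projectivization_iff_submodule_le] at hP hQ
  have h_disjoint : Disjoint Q.submodule H := (isAtom_submodule Q).not_le_iff_disjoint.mp hQ
  rw [sup_inf_assoc_of_le _ hP, h_disjoint.eq_bot, sup_bot_eq]

lemma eq_of_mem_of_le_sup (hP : P ∈ H.projectivization) (hQ : Q ∉ H.projectivization)
    (hR : R ∈ H.projectivization) (hRPQ : R.submodule ≤ P.submodule ⊔ Q.submodule) : R = P := by
  rw [← submodule_le_submodule_iff, ← submodule_sup_inf_eq_left hP hQ]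
  exact le_inf hRPQ ((H.mem_projectivization_iff_submodule_le R).mp hR)

lemma exists_disjoint_natCard_eq_pow [Finite F] {n : ℕ} (hH : finrank F H = n + 1)
    (hP : P ∈ H.projectivization) :
    ∃ W ≤ H, Disjoint P.submodule W ∧ Nat.card W = Nat.card F ^ n := by
  rw [Submodule.mem_projectivization_iff_submodule_le] at hP
  obtain ⟨U, hU⟩ := exists_isCompl P.submodule
  have h_disjoint : Disjoint P.submodule (U ⊓ H) := hU.disjoint.mono_right inf_le_left
  have : Module.Finite F H := finite_of_finrank_eq_succ hH
  have : Module.Finite F ↥(U ⊓ H) := Submodule.finiteDimensional_inf_right U H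
  have h_finrank := Submodule.finrank_sup_add_finrank_inf_eq P.submodule (U ⊓ H)
  rw [← sup_inf_assoc_of_le U hP, hU.sup_eq_top, top_inf_eq, h_disjoint.eq_bot, finrank_bot, hH,
    P.finrank_submodule] at h_finrank
  refine ⟨U ⊓ H, inf_le_right, h_disjoint, ?_⟩
  rw [natCard_eq_pow_finrank (K := F), show finrank F ↥(U ⊓ H) = n by omega]

/-- For a vector `a` outside `H`, the lines through `P` and `⟨a + w⟩`, `w ∈ W`, are distinct. -/
lemma enatCard_le_encard_image_sup_compl (hH : H ≠ ⊤) (hP : P ∈ H.projectivization)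
    {W : Submodule F V} (hW : W ≤ H) (h_disjoint : Disjoint P.submodule W) :
    ENat.card W ≤ ((fun Q : ℙ F V ↦ P.submodule ⊔ Q.submodule) ''
      (H.projectivization : Set (ℙ F V))ᶜ).encard := by
  obtain ⟨a, ha⟩ : ∃ a, a ∉ H := by simpa [Submodule.eq_top_iff'] using hH
  have h_add (w : W) : a + w ∉ H := by rwa [H.add_mem_iff_left (hW w.2)]
  have h_ne (w : W) : a + w ≠ 0 := fun h ↦ h_add w (h ▸ H.zero_mem)
  let point (w : W) : ℙ F V := mk F (a + w) (h_ne w)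
  have h_point (w : W) : point w ∉ H.projectivization := h_add w
  have h_inj : Function.Injective fun w ↦ P.submodule ⊔ (point w).submodule := by
    intro w w' (h : P.submodule ⊔ (point w).submodule = P.submodule ⊔ (point w').submodule)
    have mem_line (x : W) : a + (x : V) ∈ P.submodule ⊔ (point x).submodule :=
      Submodule.mem_sup_right (by rw [submodule_mk]; exact Submodule.mem_span_singleton_self _)
    have h_sub : (w : V) - w' ∈ P.submodule := by
      rw [← submodule_sup_inf_eq_left hP (h_point w)]
      refine ⟨?_, H.sub_mem (hW w.2) (hW w'.2)⟩
      have := Submodule.sub_mem _ (mem_line w) (h ▸ mem_line w')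
      rwa [add_sub_add_left_eq_sub] at this
    exact Subtype.ext (sub_eq_zero.mp
      (Submodule.disjoint_def.mp h_disjoint _ h_sub (W.sub_mem w.2 w'.2)))
  refine h_inj.encard_range.trans (Set.encard_le_encard ?_)
  rintro _ ⟨w, rfl⟩
  exact ⟨point w, h_point w, rfl⟩

lemma submodule_eq_span_singleton_sub {u v : V} (hQ : Q.submodule = F ∙ u)
    (hR : R.submodule = F ∙ v) (hQR : Q ≠ R) (hQH : Q ∉ H.projectivization)
    (huv : u - v ∈ H) (hP : P ∈ H.projectivization)
    (hPQR : P.submodule ≤ Q.submodule ⊔ R.submodule) : P.submodule = F ∙ (u - v) := by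
  have h_sub : u - v ≠ 0 := fun h ↦
    hQR (submodule_injective (by rw [hQ, hR, sub_eq_zero.mp h]))
  have hPQ : P ≠ Q := fun h ↦ hQH (h ▸ hP)
  have h_dir : mk F (u - v) h_sub = P := by
    refine eq_of_mem_of_le_sup hP hQH huv ?_
    rw [sup_comm, submodule_sup_eq_of_le_sup hPQ hPQR, hQ, hR, submodule_mk,
      Submodule.span_singleton_le_iff_mem]
    exact Submodule.sub_mem _ (Submodule.mem_sup_left (Submodule.mem_span_singleton_self u))
      (Submodule.mem_sup_right (Submodule.mem_span_singleton_self v))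
  rw [← h_dir, submodule_mk]

namespace IsTangentFree

variable {S : Set (ℙ F V)}

lemma exists_ne_le_sup (hS : IsTangentFree S) (hP : P ∈ S) (hPQ : P ≠ Q) :
    ∃ R ∈ S, R ≠ P ∧ R.submodule ≤ P.submodule ⊔ Q.submodule := by
  by_contra! h
  refine hS _ (finrank_submodule_sup_submodule hPQ) ⟨P, ⟨hP, ?_⟩, fun R ⟨hRS, hR⟩ ↦ ?_⟩
  · exact (Submodule.mem_projectivization_iff_submodule_le _ P).mpr le_sup_left
  · by_contra hRP
    exact h R hRS hRP ((Submodule.mem_projectivization_iff_submodule_le _ R).mp hR)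

lemma mem_secantPoints_sdiff (hS : IsTangentFree S)
    (h_nonempty : (S \ H.projectivization).Nonempty) (hPH : P ∈ H.projectivization)
    (hPS : P ∉ S) : P ∈ secantPoints (S \ H.projectivization) := by
  obtain ⟨Q, hQS, hQH⟩ := h_nonempty
  have hPQ : P ≠ Q := fun h ↦ hPS (h ▸ hQS)
  obtain ⟨R, hRS, hRQ, hR⟩ := hS.exists_ne_le_sup hQS hPQ.symm
  have hRH : R ∉ H.projectivization := fun hRH ↦
    hPS (eq_of_mem_of_le_sup hPH hQH hRH (sup_comm Q.submodule _ ▸ hR) ▸ hRS)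
  refine ⟨Q, ⟨hQS, hQH⟩, R, ⟨hRS, hRH⟩, hRQ.symm, ?_⟩
  rw [submodule_sup_eq_of_le_sup hRQ hR]
  exact le_sup_right

lemma image_sup_compl_subset (hS : IsTangentFree S) (hPS : P ∈ S) (hPH : P ∈ H.projectivization) :
    (fun Q : ℙ F V ↦ P.submodule ⊔ Q.submodule) '' (H.projectivization : Set (ℙ F V))ᶜ ⊆
      (fun Q ↦ P.submodule ⊔ Q.submodule) '' (S \ H.projectivization) := by
  rintro _ ⟨Q, hQH, rfl⟩
  have hPQ : P ≠ Q := fun h ↦ hQH (h ▸ hPH)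
  obtain ⟨R, hRS, hRP, hR⟩ := hS.exists_ne_le_sup hPS hPQ
  have hRH : R ∉ H.projectivization := fun hRH ↦ hRP (eq_of_mem_of_le_sup hPH hQH hRH hR)
  exact ⟨R, ⟨hRS, hRH⟩, submodule_sup_eq_of_le_sup hRP hR⟩

lemma notMem_secantPoints_sdiff [Finite F] (hS : IsTangentFree S) {n : ℕ} (hH : H ≠ ⊤)
    (hn : finrank F H = n + 1)
    (h_card : (S \ H.projectivization).encard ≤ (Nat.card F ^ n : ℕ))
    (hPS : P ∈ S) (hPH : P ∈ H.projectivization) :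
    P ∉ secantPoints (S \ H.projectivization) := by
  obtain ⟨W, hWH, h_disjoint, hW⟩ := exists_disjoint_natCard_eq_pow hn hPH
  have : Finite W := Nat.finite_of_card_ne_zero (hW ▸ pow_ne_zero n Nat.card_pos.ne')
  have h_finite : (S \ H.projectivization).Finite := Set.finite_of_encard_le_coe h_card
  have h_inj : Set.InjOn (fun Q : ℙ F V ↦ P.submodule ⊔ Q.submodule)
      (S \ H.projectivization) := by
    refine h_finite.injOn_of_encard_image_eq (le_antisymm (Set.encard_image_le _ _) ?_)
    calc (S \ H.projectivization).encard
        ≤ ENat.card W := by rwa [ENat.card_eq_coe_natCard, hW]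
      _ ≤ _ := enatCard_le_encard_image_sup_compl hH hPH hWH h_disjoint
      _ ≤ _ := Set.encard_le_encard (hS.image_sup_compl_subset hPS hPH)
  rintro ⟨Q, hQ, R, hR, hQR, hPQR⟩
  have hPQ : P ≠ Q := fun h ↦ hQ.2 (h ▸ hPH)
  have hPR : P ≠ R := fun h ↦ hR.2 (h ▸ hPH)
  refine hQR (h_inj hQ hR ?_)
  change P.submodule ⊔ Q.submodule = P.submodule ⊔ R.submodule
  rw [sup_comm, submodule_sup_eq_of_le_sup hPQ hPQR, sup_comm P.submodule,
    submodule_sup_eq_of_le_sup hPR (sup_comm Q.submodule _ ▸ hPQR), sup_comm]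

end IsTangentFree

theorem stmt_4_general [Finite F] {n k : ℕ} (hH : H ≠ ⊤) (hn : finrank F H = n + 1)
    {S : Set (ℙ F V)} (hS : IsTangentFree S) (hcard : S.ncard = Nat.card F ^ n + k)
    (hk : (S ∩ H.projectivization).ncard = k) :
    (S \ H.projectivization).ncard = Nat.card F ^ n ∧
      S ∩ H.projectivization =
        (H.projectivization : Set (ℙ F V)) \ secantPoints (S \ H.projectivization) := by
  have h_pos : 0 < Nat.card F ^ n := pow_pos Nat.card_pos n
  have hS_finite : S.Finite := Set.finite_of_ncard_ne_zero (by omega)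
  have hA : (S \ H.projectivization).ncard = Nat.card F ^ n := by
    have := Set.ncard_inter_add_ncard_sdiff_eq_ncard S H.projectivization hS_finite
    omega
  refine ⟨hA, Set.Subset.antisymm ?_ ?_⟩
  · rintro P ⟨hPS, hPH⟩
    refine ⟨hPH, hS.notMem_secantPoints_sdiff hH hn ?_ hPS hPH⟩
    exact (hS_finite.sdiff.cast_ncard_eq.symm.trans (congrArg _ hA)).le
  · rintro P ⟨hPH, hP⟩
    refine ⟨by_contra fun hPS ↦ hP ?_, hPH⟩
    exact hS.mem_secantPoints_sdiff (Set.nonempty_of_ncard_ne_zero (by omega)) hPH hPS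

end ProjectiveSpace

lemma pointsOn_eq_coe_projectivization (L : Submodule F (Fin 3 → F)) :
    pointsOn L = L.projectivization :=
  Set.ext fun P ↦ (L.mem_projectivization_iff_submodule_le P).symm

lemma NoTangents.isTangentFree {S : Set (PGPoint F)} (hS : NoTangents S) : IsTangentFree S := by
  intro L hL
  rw [← pointsOn_eq_coe_projectivization]
  exact hS L hL

lemma mem_Linf_iff {v : Fin 3 → F} : v ∈ Linf F ↔ v 2 = 0 := Iff.rfl

lemma Linf_ne_top : Linf F ≠ ⊤ := fun h ↦ by
  simpa [mem_Linf_iff] using h.ge (Submodule.mem_top (x := (![0, 0, 1] : Fin 3 → F)))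

lemma finrank_Linf : finrank F (Linf F) = 2 := by
  have h_proj : (LinearMap.proj 2 : (Fin 3 → F) →ₗ[F] F) ≠ 0 := fun h ↦
    Linf_ne_top (by rw [Linf, h, LinearMap.ker_zero])
  have h := Module.Dual.finrank_ker_add_one_of_ne_zero h_proj
  rw [finrank_fin_fun] at h
  exact Nat.succ_injective h

lemma exists_submodule_eq_span_affine {P : PGPoint F} (hP : P ∉ (Linf F).projectivization) :
    ∃ x y : F, P.submodule = F ∙ ![x, y, 1] := by
  induction P using Projectivization.ind with
  | h v hv =>
    have hv2 : v 2 ≠ 0 := hP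
    refine ⟨v 0 / v 2, v 1 / v 2, ?_⟩
    rw [submodule_mk, ← Submodule.span_singleton_smul_eq (inv_ne_zero hv2).isUnit v]
    congr 2
    ext i
    fin_cases i <;> simp [hv2, div_eq_inv_mul]

lemma affine_sub_affine (x₁ y₁ x₂ y₂ : F) :
    ![x₁, y₁, 1] - ![x₂, y₂, 1] = ![x₁ - x₂, y₁ - y₂, 0] := by
  ext i
  fin_cases i <;> simp

lemma dirs_eq_secantPoints_inter {A : Set (PGPoint F)} (hA : Disjoint A (pointsOn (Linf F))) :
    dirs A = secantPoints A ∩ pointsOn (Linf F) := by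
  rw [pointsOn_eq_coe_projectivization] at hA ⊢
  ext P
  constructor
  · rintro ⟨Q, hQ, R, hR, hQR, x₁, y₁, x₂, y₂, hQs, hRs, hPs⟩
    refine ⟨⟨Q, hQ, R, hR, hQR, ?_⟩, ?_⟩
    · rw [hPs, hQs, hRs, Submodule.span_singleton_le_iff_mem, ← affine_sub_affine]
      exact Submodule.sub_mem _ (Submodule.mem_sup_left (Submodule.mem_span_singleton_self _))
        (Submodule.mem_sup_right (Submodule.mem_span_singleton_self _))
    · refine (Submodule.mem_projectivization_iff_submodule_le _ P).mpr ?_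
      rw [hPs, Submodule.span_singleton_le_iff_mem, mem_Linf_iff]
      rfl
  · rintro ⟨⟨Q, hQ, R, hR, hQR, hPQR⟩, hP⟩
    have hQH := Set.disjoint_left.mp hA hQ
    obtain ⟨x₁, y₁, hQs⟩ := exists_submodule_eq_span_affine hQH
    obtain ⟨x₂, y₂, hRs⟩ := exists_submodule_eq_span_affine (Set.disjoint_left.mp hA hR)
    refine ⟨Q, hQ, R, hR, hQR, x₁, y₁, x₂, y₂, hQs, hRs, ?_⟩
    have h_sub : ![x₁, y₁, 1] - ![x₂, y₂, 1] ∈ Linf F := by simp [mem_Linf_iff]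
    rw [← affine_sub_affine]
    exact submodule_eq_span_singleton_sub hQs hRs hQR hQH h_sub hP hPQR

/-- if a set without tangents `S` of size `q + k` meets the line at
infinity in exactly `k` points, then its affine part `A = S \ L∞` has exactly `q`
points and `S ∩ L∞` is exactly the set of directions NOT determined by `A`. -/
theorem stmt_4 [Fintype F] (q k : ℕ) (hq : Fintype.card F = q)
    (S : Set (PGPoint F)) (hS : NoTangents S)
    (hcard : S.ncard = q + k)
    (hk : (S ∩ pointsOn (Linf F)).ncard = k) :
    (S \ pointsOn (Linf F)).ncard = q ∧
      S ∩ pointsOn (Linf F) = pointsOn (Linf F) \ dirs (S \ pointsOn (Linf F)) := by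
  rw [dirs_eq_secantPoints_inter Set.disjoint_sdiff_left, Set.sdiff_inter_self_eq_sdiff]
  simpa [pointsOn_eq_coe_projectivization, hq] using
    stmt_4_general (H := Linf F) Linf_ne_top finrank_Linf hS.isTangentFree
      (by simpa [hq] using hcard) (pointsOn_eq_coe_projectivization (Linf F) ▸ hk)
end

section
/- Let p be a prime and let S be a non-empty set without tangents in PG(2,p) with |S| ≤ 2p. If there is a line L containing x points of S with 4x ≥ 2|S| − (p−1) (i.e. x ≥ |S|/2 − (p−1)/4), then S is the trivial set without tangents, i.e. there exist two distinct lines L1, L2 such that S is the set of all points on L1 or L2 different from L1 ∩ L2. -/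
/-!
`PG(2,F)`: points are the 1-dimensional subspaces of `F^3` (modelled as the
projectivization of `Fin 3 → F`), lines are the 2-dimensional subspaces.
-/

variable {F : Type*} [Field F]

/-- The trivial set without tangents: all points on one of two distinct lines,
different from their intersection point. -/
def IsTrivialSWT (S : Set (PGPoint F)) : Prop :=
  ∃ L1 L2 : Submodule F (Fin 3 → F), IsProjLine F L1 ∧ IsProjLine F L2 ∧ L1 ≠ L2 ∧
    S = (pointsOn L1 ∪ pointsOn L2) \ (pointsOn L1 ∩ pointsOn L2)

/-!
Choose affine coordinates in which `L` is the line at infinity and some point of `L` outside `S` is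
the point at infinity of the vertical lines. Let `U` be the set of affine points of `S` and `A` the
set of slopes of its points on `L`. A line whose slope lies in `A` is not a tangent, so it meets
`U`; hence for `m ∈ A` the Rédei polynomial `∏ (X - (y - m * x))` over the points `(x, y)` of `U` is
divisible by `X ^ q - X`, and its coefficients between the degrees `|U| - |A|` and `q` vanish. Such
a coefficient is a polynomial in `m` of degree less than `|A|`, so it vanishes for every `m`, and
every Rédei polynomial is lacunary: `X ^ q * g + h` with `g` and `h` of small degree.

A lacunary polynomial with all its roots in the field divides `(X * g + h) * (g * h' - g' * h)`,
which has smaller degree and therefore vanishes. Either `X * g + h = 0`, and `U` meets every line of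
slope `m`, or `h = c * g`, and `U` contains the line of slope `m` and intercept `-c`. If `m ∉ A`
then, as there are no tangents, either case gives `|U| ≥ 2 * q`, hence `A = ∅` and `2 * |U| ≤ q`, a
contradiction. So every slope lies in `A`, and `U` consists of `q` points that meet every
nonvertical line, which forces `U` to be a vertical line.
-/

section Lacunary

open Polynomial

lemma wronskian_mul_mul (d a b : F[X]) : wronskian (d * a) (d * b) = d ^ 2 * wronskian a b := by
  simp only [wronskian, derivative_mul]
  ring

lemma pow_sub_one_dvd_wronskian {d f : F[X]} {n : ℕ} (hf : d ^ n ∣ f) (g : F[X]) :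
    d ^ (n - 1) ∣ wronskian g f :=
  dvd_sub ((pow_sub_one_dvd_derivative_of_pow_dvd hf).mul_left _)
    (((pow_dvd_pow _ (Nat.sub_le _ _)).trans hf).mul_left _)

lemma natDegree_eq_zero_of_derivative_eq_zero_of_lt {p : ℕ} [CharP F p] {f : F[X]}
    (hf : derivative f = 0) (hfp : f.natDegree < p) : f.natDegree = 0 := by
  have hexpand := expand_contract p hf (by omega)
  have hdeg := natDegree_expand p (contract p f)
  rw [hexpand] at hdeg
  exact Nat.eq_zero_of_dvd_of_lt (Dvd.intro_left _ hdeg.symm) hfp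

-- Dividing by the gcd leaves coprime polynomials with zero Wronskian, whose derivatives vanish.
lemma exists_eq_C_mul_of_wronskian_eq_zero {p : ℕ} [CharP F p] {g h : F[X]} (hg : g ≠ 0)
    (hgp : g.natDegree < p) (hhp : h.natDegree < p) (hgh : wronskian g h = 0) :
    ∃ c, h = C c * g := by
  rcases eq_or_ne h 0 with rfl | hh
  · exact ⟨0, by simp⟩
  classical
  let := IsBezout.toGCDDomain F[X]
  obtain ⟨a, b, ha, hb, hab⟩ := extract_gcd g h
  set d := gcd g h
  have hd : d ≠ 0 := left_ne_zero_of_mul (ha ▸ hg)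
  have ha0 : a ≠ 0 := right_ne_zero_of_mul (ha ▸ hg)
  have hwronskian : wronskian a b = 0 := by
    rw [ha, hb, wronskian_mul_mul] at hgh
    exact (mul_eq_zero.mp hgh).resolve_left (pow_ne_zero 2 hd)
  obtain ⟨ha', hb'⟩ := (IsCoprime.wronskian_eq_zero_iff ((gcd_isUnit_iff a b).mp hab)).mp hwronskian
  have hadeg : a.natDegree < p :=
    (natDegree_le_of_dvd (Dvd.intro_left d ha.symm) hg).trans_lt hgp
  have hbdeg : b.natDegree < p :=
    (natDegree_le_of_dvd (Dvd.intro_left d hb.symm) hh).trans_lt hhp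
  obtain ⟨α, rfl⟩ := natDegree_eq_zero.mp (natDegree_eq_zero_of_derivative_eq_zero_of_lt ha' hadeg)
  obtain ⟨β, rfl⟩ := natDegree_eq_zero.mp (natDegree_eq_zero_of_derivative_eq_zero_of_lt hb' hbdeg)
  refine ⟨β / α, ?_⟩
  rw [hb, ha, mul_left_comm, ← C_mul, div_mul_cancel₀ β (C_ne_zero.mp ha0)]

lemma wronskian_X_pow_card_mul_add [Fintype F] (g h : F[X]) :
    wronskian g (X ^ Fintype.card F * g + h) = wronskian g h := by
  simp only [wronskian, derivative_add, derivative_mul, derivative_X_pow, map_zero,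
    Nat.cast_card_eq_zero]
  ring

lemma eval_X_pow_card_mul_add [Fintype F] (g h : F[X]) (a : F) :
    (X ^ Fintype.card F * g + h).eval a = (X * g + h).eval a := by
  simp [FiniteField.pow_card]

lemma roots_X_pow_card_mul_add_le [Fintype F] {g h : F[X]}
    (hW : (X * g + h) * wronskian g h ≠ 0) :
    (X ^ Fintype.card F * g + h).roots ≤ ((X * g + h) * wronskian g h).roots := by
  classical
  refine Multiset.le_iff_count.mpr fun a => ?_
  rw [count_roots, count_roots, rootMultiplicity_mul hW]
  set f := X ^ Fintype.card F * g + h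
  rcases Nat.eq_zero_or_pos (f.rootMultiplicity a) with h0 | hpos
  · omega
  have hroot : 1 ≤ (X * g + h).rootMultiplicity a := by
    refine (rootMultiplicity_pos (left_ne_zero_of_mul hW)).mpr ?_
    rw [IsRoot, ← eval_X_pow_card_mul_add]
    exact (rootMultiplicity_pos'.mp hpos).2
  have hwronskian : f.rootMultiplicity a - 1 ≤ (wronskian g h).rootMultiplicity a := by
    rw [le_rootMultiplicity_iff (right_ne_zero_of_mul hW), ← wronskian_X_pow_card_mul_add]
    exact pow_sub_one_dvd_wronskian (pow_rootMultiplicity_dvd f a) g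
  omega

theorem lacunary_dichotomy [Fintype F] {g h : F[X]} {n : ℕ}
    (hf : (X ^ Fintype.card F * g + h).Splits) (hg : g.natDegree < n) (hh : h.natDegree ≤ n)
    (hn : 2 * n ≤ Fintype.card F) : X * g + h = 0 ∨ wronskian g h = 0 := by
  by_contra! hne
  have hg0 : g ≠ 0 := by
    rintro rfl
    exact hne.2 (wronskian_zero_left h)
  have hdeg : (X ^ Fintype.card F * g + h).natDegree = Fintype.card F + g.natDegree := by
    have hlead : (X ^ Fintype.card F * g).natDegree = Fintype.card F + g.natDegree := by
      rw [natDegree_mul (by simp) hg0, natDegree_X_pow]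
    rw [natDegree_add_eq_left_of_natDegree_lt (by omega), hlead]
  have hlin : (X * g + h).natDegree ≤ n := by
    refine natDegree_add_le_of_degree_le (natDegree_mul_le.trans ?_) hh
    rw [natDegree_X]
    omega
  have hle : Fintype.card F + g.natDegree ≤ (X * g + h).natDegree + (wronskian g h).natDegree :=
    calc Fintype.card F + g.natDegree
      _ = (X ^ Fintype.card F * g + h).roots.card := by rw [← hdeg, hf.natDegree_eq_card_roots]
      _ ≤ ((X * g + h) * wronskian g h).roots.card :=
        Multiset.card_le_card (roots_X_pow_card_mul_add_le (mul_ne_zero hne.1 hne.2))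
      _ ≤ ((X * g + h) * wronskian g h).natDegree := card_roots' _
      _ ≤ _ := natDegree_mul_le
  have := natDegree_wronskian_lt_add hne.2
  omega

lemma X_pow_card_sub_X_dvd [Fintype F] {f : F[X]} (hf : ∀ a, f.IsRoot a) :
    X ^ Fintype.card F - X ∣ f := by
  rcases eq_or_ne f 0 with rfl | hf0
  · exact dvd_zero _
  have hroots := FiniteField.roots_X_pow_card_sub_X F
  have hsplits : (X ^ Fintype.card F - X : F[X]).Splits := by
    rw [splits_iff_card_roots, hroots,
      FiniteField.X_pow_card_sub_X_natDegree_eq F Fintype.one_lt_card]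
    rfl
  refine hsplits.dvd_of_roots_le_roots
    (FiniteField.X_pow_card_sub_X_ne_zero F Fintype.one_lt_card) ?_
  rw [hroots]
  exact (Multiset.le_iff_subset Finset.univ.nodup).mpr fun a _ => (mem_roots hf0).mpr (hf a)

lemma coeff_eq_zero_of_X_pow_sub_X_dvd {f : F[X]} {n k : ℕ} (hf : X ^ n - X ∣ f)
    (hk : f.natDegree + 1 < n + k) (hkn : k < n) : f.coeff k = 0 := by
  rcases eq_or_ne f 0 with rfl | hf0
  · exact coeff_zero k
  obtain ⟨Q, rfl⟩ := hf
  have hQ : Q ≠ 0 := right_ne_zero_of_mul hf0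
  rw [natDegree_mul (left_ne_zero_of_mul hf0) hQ,
    FiniteField.X_pow_card_sub_X_natDegree_eq F (by omega)] at hk
  rw [sub_mul, coeff_sub, coeff_X_pow_mul', if_neg (by omega), zero_sub, neg_eq_zero]
  cases k with
  | zero => exact coeff_X_mul_zero Q
  | succ k => rw [coeff_X_mul, coeff_eq_zero_of_natDegree_lt (by omega)]

lemma exists_eq_X_pow_mul_add_of_coeff_eq_zero {f : F[X]} {n d : ℕ}
    (hf : ∀ k, d < k → k < n → f.coeff k = 0) :
    ∃ g h : F[X], f = X ^ n * g + h ∧ g.natDegree = f.natDegree - n ∧ h.natDegree ≤ d := by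
  have hmonic : (X ^ n : F[X]).Monic := monic_X_pow n
  have hdivmod : f = X ^ n * (f /ₘ X ^ n) + f %ₘ X ^ n := by
    rw [add_comm, modByMonic_add_div]
  refine ⟨f /ₘ X ^ n, f %ₘ X ^ n, hdivmod, by rw [natDegree_divByMonic f hmonic, natDegree_X_pow],
    natDegree_le_iff_coeff_eq_zero.mpr fun k hk => ?_⟩
  rcases lt_or_ge k n with hkn | hkn
  · rw [← hf k hk hkn]
    nth_rw 2 [hdivmod]
    rw [coeff_add, coeff_X_pow_mul', if_neg (by omega), zero_add]
  · refine coeff_eq_zero_of_degree_lt ((degree_modByMonic_lt f hmonic).trans_le ?_)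
    rw [degree_X_pow]
    exact_mod_cast hkn

lemma X_pow_card_add_C [Fintype F] (c : F) :
    (X ^ Fintype.card F + C c : F[X]) = (X + C c) ^ Fintype.card F := by
  obtain ⟨p, _, n, hp, hcard⟩ := FiniteField.card' F
  have : Fact p.Prime := ⟨hp⟩
  nth_rw 1 [← FiniteField.pow_card c]
  rw [hcard, add_pow_char_pow, C_pow]

end Lacunary

section Redei

open Polynomial

/-- The intercept of the line of slope `m` through the affine point `P`. The lines of slope `m` are
the fibres of `intercept m`, so a set meets all of them when `intercept m` maps it onto `F`. -/
def intercept (m : F) (P : F × F) : F :=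
  P.2 - m * P.1

/-- The Rédei polynomial of an affine point set, specialised at the slope `m`: its roots, with
multiplicity, are the intercepts of the lines of slope `m` through the points of `U`. -/
noncomputable def redei (U : Finset (F × F)) (m : F) : F[X] :=
  ∏ P ∈ U, (X - C (intercept m P))

lemma redei_eq_prod_map (U : Finset (F × F)) (m : F) :
    redei U m = ((U.val.map (intercept m)).map fun a => X - C a).prod := by
  rw [redei, Finset.prod, Multiset.map_map]
  rfl

lemma redei_ne_zero (U : Finset (F × F)) (m : F) : redei U m ≠ 0 :=
  Finset.prod_ne_zero_iff.mpr fun _ _ => X_sub_C_ne_zero _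

lemma natDegree_redei (U : Finset (F × F)) (m : F) : (redei U m).natDegree = U.card :=
  natDegree_finsetProd_X_sub_C_eq_card U (intercept m)

lemma splits_redei (U : Finset (F × F)) (m : F) : (redei U m).Splits :=
  Splits.prod fun _ _ => Splits.X_sub_C _

lemma roots_redei (U : Finset (F × F)) (m : F) : (redei U m).roots = U.val.map (intercept m) := by
  rw [redei_eq_prod_map, roots_multiset_prod_X_sub_C]

lemma isRoot_redei_iff {U : Finset (F × F)} {m c : F} :
    (redei U m).IsRoot c ↔ ∃ P ∈ U, intercept m P = c := by
  rw [← mem_roots (redei_ne_zero U m), roots_redei, Multiset.mem_map]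
  rfl

lemma surjOn_intercept_iff {U : Finset (F × F)} {m : F} :
    Set.SurjOn (intercept m) U Set.univ ↔ ∀ c, (redei U m).IsRoot c := by
  simp only [isRoot_redei_iff]
  exact ⟨fun h c => h (Set.mem_univ c), fun h c _ => h c⟩

-- Up to sign the coefficient is an elementary symmetric polynomial in the `P.2 - m * P.1`.
lemma exists_eval_eq_coeff_redei (U : Finset (F × F)) (k : ℕ) :
    ∃ Q : F[X], Q.natDegree ≤ U.card - k ∧ ∀ m, Q.eval m = (redei U m).coeff k := by
  rcases lt_or_ge U.card k with hk | hk
  · refine ⟨0, by simp, fun m => ?_⟩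
    rw [coeff_eq_zero_of_natDegree_lt (by rwa [natDegree_redei]), eval_zero]
  refine ⟨C ((-1) ^ (U.card - k)) *
    ∑ T ∈ U.powersetCard (U.card - k), ∏ P ∈ T, (C P.2 - X * C P.1), ?_, fun m => ?_⟩
  · refine (natDegree_C_mul_le _ _).trans (natDegree_sum_le_of_forall_le _ _ fun T hT => ?_)
    rw [← (Finset.mem_powersetCard.mp hT).2, Finset.card_eq_sum_ones]
    refine (natDegree_prod_le _ _).trans (Finset.sum_le_sum fun P _ => ?_)
    compute_degree
  · rw [redei_eq_prod_map, Multiset.prod_X_sub_C_coeff _ (by simpa using hk), Multiset.card_map,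
      Finset.esymm_map_val]
    simp only [eval_mul, eval_C, eval_finsetSum, eval_prod, eval_sub, eval_X]
    rfl

lemma coeff_redei_eq_zero {U : Finset (F × F)} {A : Finset F} {k : ℕ}
    (hA : ∀ m ∈ A, (redei U m).coeff k = 0) (hk : U.card - k < A.card) (m : F) :
    (redei U m).coeff k = 0 := by
  obtain ⟨Q, hdeg, hQ⟩ := exists_eval_eq_coeff_redei U k
  have hzero : Q = 0 := eq_zero_of_natDegree_lt_card_of_eval_eq_zero' Q A
    (fun m hm => by rw [hQ, hA m hm]) (hdeg.trans_lt hk)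
  rw [← hQ, hzero, eval_zero]

variable [Fintype F]

lemma exists_redei_eq_X_pow_card_mul_add {U : Finset (F × F)} {A : Finset F}
    (hblock : ∀ m ∈ A, Set.SurjOn (intercept m) U Set.univ) (hA : A.Nonempty)
    (hAcard : A.card < Fintype.card F) (m : F) :
    ∃ g h : F[X], redei U m = X ^ Fintype.card F * g + h ∧
      g.natDegree = U.card - Fintype.card F ∧ h.natDegree ≤ U.card - A.card := by
  rw [← natDegree_redei U m]
  refine exists_eq_X_pow_mul_add_of_coeff_eq_zero fun k hk hkq => ?_
  rw [natDegree_redei] at hk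
  have := hA.card_pos
  refine coeff_redei_eq_zero (A := A) (fun m hm => ?_) (by omega) m
  refine coeff_eq_zero_of_X_pow_sub_X_dvd
    (X_pow_card_sub_X_dvd (surjOn_intercept_iff.mp (hblock m hm))) ?_ hkq
  rw [natDegree_redei]
  omega

lemma preimage_intercept_subset_of_pow_dvd_redei {U : Finset (F × F)} {m c : F}
    (hU : (X - C c) ^ Fintype.card F ∣ redei U m) : intercept m ⁻¹' {c} ⊆ U := by
  classical
  have hcount : Fintype.card F ≤ (U.filter fun P => c = intercept m P).card := by
    rwa [← le_rootMultiplicity_iff (redei_ne_zero U m), ← count_roots, roots_redei,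
      Multiset.count_map] at hU
  have hsub : (U.filter fun P => c = intercept m P) ⊆
      Finset.univ.image fun a : F => (a, m * a + c) := by
    intro P hP
    obtain ⟨-, rfl⟩ := Finset.mem_filter.mp hP
    exact Finset.mem_image.mpr ⟨P.1, Finset.mem_univ _, Prod.ext rfl (by simp [intercept])⟩
  have heq := Finset.eq_of_subset_of_card_le hsub (Finset.card_image_le.trans hcount)
  rintro P rfl
  refine Finset.filter_subset _ U (heq.ge ?_)
  exact Finset.mem_image.mpr ⟨P.1, Finset.mem_univ _, Prod.ext rfl (by simp [intercept])⟩

theorem surjOn_intercept_or_exists_line_subset {p : ℕ} [CharP F p] {U : Finset (F × F)}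
    {A : Finset F} (hblock : ∀ m ∈ A, Set.SurjOn (intercept m) U Set.univ)
    (hU : Fintype.card F ≤ U.card) (hA : A.card < Fintype.card F)
    (hq : 2 * U.card ≤ 2 * A.card + Fintype.card F) (hp : U.card < A.card + p) (m : F) :
    Set.SurjOn (intercept m) U Set.univ ∨ ∃ c, intercept m ⁻¹' {c} ⊆ U := by
  have hqpos : 0 < Fintype.card F := Fintype.card_pos
  have hApos : 0 < A.card := by omega
  obtain ⟨g, h, hgh, hg, hh⟩ :=
    exists_redei_eq_X_pow_card_mul_add hblock (Finset.card_pos.mp hApos) hA m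
  have hdeg := natDegree_redei U m
  have hg0 : g ≠ 0 := by
    rintro rfl
    rw [hgh, mul_zero, zero_add] at hdeg
    omega
  have hsplits := splits_redei U m
  rw [hgh] at hsplits
  rcases lacunary_dichotomy (n := U.card - A.card) hsplits (by omega) hh (by omega) with hlin | hW
  · left
    refine surjOn_intercept_iff.mpr fun c => ?_
    rw [hgh, IsRoot, eval_X_pow_card_mul_add, hlin, eval_zero]
  · right
    obtain ⟨c, hc⟩ := exists_eq_C_mul_of_wronskian_eq_zero (p := p) hg0 (by omega) (by omega) hW
    refine ⟨-c, preimage_intercept_subset_of_pow_dvd_redei ⟨g, ?_⟩⟩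
    rw [hgh, hc, ← add_mul, X_pow_card_add_C, C_neg, sub_neg_eq_add]

end Redei

section Affine

lemma two_mul_card_le_of_surjOn {α β : Type*} [Fintype β] {U : Finset α} {f : α → β}
    (hsurj : Set.SurjOn f U Set.univ) (hpair : ∀ P ∈ U, ∃ Q ∈ U, Q ≠ P ∧ f Q = f P) :
    2 * Fintype.card β ≤ U.card := by
  classical
  rw [Finset.card_eq_sum_card_fiberwise (f := f) (t := Finset.univ) fun _ _ => by simp,
    mul_comm, ← Finset.card_univ, ← smul_eq_mul]
  refine Finset.card_nsmul_le_sum _ _ _ fun b _ => ?_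
  obtain ⟨P, hP, rfl⟩ := hsurj (Set.mem_univ b)
  obtain ⟨Q, hQ, hne, hQP⟩ := hpair P hP
  exact Finset.one_lt_card.mpr
    ⟨Q, Finset.mem_filter.mpr ⟨hQ, hQP⟩, P, Finset.mem_filter.mpr ⟨hP, rfl⟩, hne⟩

lemma intercept_eq_intercept_iff {m : F} {P Q : F × F} (hPQ : Q.1 ≠ P.1) :
    intercept m Q = intercept m P ↔ (Q.2 - P.2) / (Q.1 - P.1) = m := by
  rw [div_eq_iff (sub_ne_zero.mpr hPQ), intercept, intercept]
  constructor <;> intro h <;> linear_combination h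

lemma fst_ne_of_intercept_eq {m : F} {P Q : F × F} (hne : Q ≠ P)
    (hPQ : intercept m Q = intercept m P) : Q.1 ≠ P.1 := by
  intro h
  rw [intercept, intercept, h, sub_left_inj] at hPQ
  exact hne (Prod.ext h hPQ)

/-- Coordinates of a set without tangents which misses the point at infinity of the vertical lines:
`U` is the set of its affine points and `A` the set of the slopes of its points at infinity. The
fields say that no line other than the line at infinity is a tangent. -/
structure IsAffineSWT (U : Finset (F × F)) (A : Finset F) : Prop where
  surjOn : ∀ m ∈ A, Set.SurjOn (intercept m) U Set.univ
  exists_ne_intercept_eq : ∀ m ∉ A, ∀ P ∈ U, ∃ Q ∈ U, Q ≠ P ∧ intercept m Q = intercept m P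
  exists_ne_fst_eq : ∀ P ∈ U, ∃ Q ∈ U, Q ≠ P ∧ Q.1 = P.1

namespace IsAffineSWT

variable [Fintype F] {U : Finset (F × F)} {A : Finset F}

lemma card_le_card (h : IsAffineSWT U A) (hne : A.Nonempty ∨ U.Nonempty) :
    Fintype.card F ≤ U.card := by
  rcases A.eq_empty_or_nonempty with rfl | ⟨m, hm⟩
  · obtain ⟨P, hP⟩ := hne.resolve_left Finset.not_nonempty_empty
    refine Finset.card_le_card_of_surjOn (fun Q => (Q.2 - P.2) / (Q.1 - P.1)) fun m _ => ?_
    obtain ⟨Q, hQ, hne, hQP⟩ := h.exists_ne_intercept_eq m (Finset.notMem_empty m) P hP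
    exact ⟨Q, hQ, (intercept_eq_intercept_iff (fst_ne_of_intercept_eq hne hQP)).mp hQP⟩
  · exact Finset.card_le_card_of_surjOn _ (by simpa using h.surjOn m hm)

lemma two_mul_card_le_card {p : ℕ} [CharP F p] (h : IsAffineSWT U A) (hA : A ≠ Finset.univ)
    (hU : Fintype.card F ≤ U.card) (hq : 2 * U.card ≤ 2 * A.card + Fintype.card F)
    (hp : U.card < A.card + p) : 2 * Fintype.card F ≤ U.card := by
  obtain ⟨m, hm⟩ := not_forall.mp (mt Finset.eq_univ_iff_forall.mpr hA)
  rcases surjOn_intercept_or_exists_line_subset h.surjOn hU (Finset.card_lt_univ_of_notMem hm)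
    hq hp m with hsurj | ⟨c, hc⟩
  · exact two_mul_card_le_of_surjOn hsurj (h.exists_ne_intercept_eq m hm)
  · refine two_mul_card_le_of_surjOn (f := Prod.fst) (fun a _ => ⟨(a, m * a + c), hc ?_, rfl⟩)
      h.exists_ne_fst_eq
    simp [intercept]

end IsAffineSWT

lemma exists_eq_vertical_line_of_surjOn [Fintype F] {U : Finset (F × F)}
    (hsurj : ∀ m : F, Set.SurjOn (intercept m) U Set.univ) (hU : U.card = Fintype.card F) :
    ∃ a, U = {a} ×ˢ Finset.univ := by
  have hinj (m : F) : Set.InjOn (intercept m) U :=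
    Finset.injOn_of_surjOn_of_card_le (t := Finset.univ) _ (by simp) (by simpa using hsurj m) hU.le
  obtain ⟨P, hP, -⟩ := hsurj 0 (Set.mem_univ 0)
  have hfst : ∀ Q ∈ U, Q.1 = P.1 := by
    intro Q hQ
    by_contra hne
    exact hne (congrArg Prod.fst (hinj _ hQ hP ((intercept_eq_intercept_iff hne).mpr rfl)))
  refine ⟨P.1, Finset.eq_of_subset_of_card_le (fun Q hQ => ?_) (by simp [hU])⟩
  exact Finset.mem_product.mpr ⟨Finset.mem_singleton.mpr (hfst Q hQ), Finset.mem_univ _⟩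

theorem IsAffineSWT.eq_univ_and_eq_vertical_line [Fintype F] {p : ℕ} [CharP F p]
    {U : Finset (F × F)} {A : Finset F} (h : IsAffineSWT U A) (hne : A.Nonempty ∨ U.Nonempty)
    (hsize : U.card + A.card ≤ 2 * Fintype.card F)
    (hq : 2 * U.card ≤ 2 * A.card + Fintype.card F) (hp : U.card < A.card + p) :
    A = Finset.univ ∧ ∃ a, U = {a} ×ˢ Finset.univ := by
  have hU := h.card_le_card hne
  have hA : A = Finset.univ := by
    by_contra hA
    have := h.two_mul_card_le_card hA hU hq hp
    have := (Finset.card_lt_iff_ne_univ A).mpr hA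
    omega
  subst hA
  rw [Finset.card_univ] at hsize
  exact ⟨rfl, exists_eq_vertical_line_of_surjOn (fun m => h.surjOn m (Finset.mem_univ m))
    (by omega)⟩

end Affine

lemma NoTangents.exists_ne {S : Set (PGPoint F)} (hS : NoTangents S)
    {L : Submodule F (Fin 3 → F)} (hL : IsProjLine F L) {P : PGPoint F} (hP : P ∈ S)
    (hPL : P ∈ pointsOn L) : ∃ Q ∈ S, Q ∈ pointsOn L ∧ Q ≠ P := by
  by_contra! h
  exact hS L hL ⟨P, ⟨hP, hPL⟩, fun Q hQ => h Q hQ.1 hQ.2⟩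

section Coordinates

variable (B : Module.Basis (Fin 3) F (Fin 3 → F))

/-- The point with homogeneous coordinates `v` with respect to the basis `B`. -/
noncomputable def coordPoint (v : Fin 3 → F) (hv : v ≠ 0) : PGPoint F :=
  Projectivization.mk F (B.equivFun.symm v) (B.equivFun.symm.map_ne_zero_iff.mpr hv)

/-- The line with dual coordinates `w` with respect to the basis `B`. -/
noncomputable def coordLine (w : Fin 3 → F) : Submodule F (Fin 3 → F) :=
  LinearMap.ker (dotProductBilin F F w ∘ₗ B.equivFun.toLinearMap)

lemma mem_coordLine {w x : Fin 3 → F} : x ∈ coordLine B w ↔ w ⬝ᵥ B.equivFun x = 0 :=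
  Iff.rfl

lemma coordPoint_mem_coordLine {v : Fin 3 → F} (hv : v ≠ 0) {w : Fin 3 → F} :
    coordPoint B v hv ∈ pointsOn (coordLine B w) ↔ w ⬝ᵥ v = 0 := by
  rw [pointsOn, Set.mem_ofPred_eq, coordPoint, Projectivization.submodule_mk,
    Submodule.span_singleton_le_iff_mem, mem_coordLine, LinearEquiv.apply_symm_apply]

lemma isProjLine_coordLine {w : Fin 3 → F} (hw : w ≠ 0) : IsProjLine F (coordLine B w) := by
  have hne : dotProductBilin F F w ∘ₗ B.equivFun.toLinearMap ≠ 0 := by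
    intro h
    refine hw (dotProduct_eq_zero_iff.mp fun v => ?_)
    have hv := LinearMap.congr_fun h (B.equivFun.symm v)
    rwa [LinearMap.comp_apply, LinearEquiv.coe_coe, LinearEquiv.apply_symm_apply] at hv
  have hker := Module.Dual.finrank_ker_add_one_of_ne_zero hne
  rw [Module.finrank_fin_fun] at hker
  exact Nat.succ_injective hker

lemma coordPoint_eq_iff {v w : Fin 3 → F} (hv : v ≠ 0) (hw : w ≠ 0) :
    coordPoint B v hv = coordPoint B w hw ↔ ∃ a : F, a • w = v := by
  rw [coordPoint, coordPoint, Projectivization.mk_eq_mk_iff']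
  simp only [← map_smul, EmbeddingLike.apply_eq_iff_eq]

/-- The affine point `P`, in the affine plane of the points with nonzero first coordinate. -/
noncomputable def affinePoint (P : F × F) : PGPoint F :=
  coordPoint B ![1, P.1, P.2] (by simp)

/-- The point at infinity of the lines of slope `m`. -/
noncomputable def slopePoint (m : F) : PGPoint F :=
  coordPoint B ![0, 1, m] (by simp)

/-- The point at infinity of the vertical lines. -/
noncomputable def verticalPoint : PGPoint F :=
  coordPoint B ![0, 0, 1] (by simp)

/-- The line at infinity of the affine plane of the points with nonzero first coordinate. -/
noncomputable def lineAtInfinity : Submodule F (Fin 3 → F) :=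
  coordLine B ![1, 0, 0]

/-- The line `y = m * x + c`. -/
noncomputable def affineLine (m c : F) : Submodule F (Fin 3 → F) :=
  coordLine B ![-c, -m, 1]

/-- The line `x = a`. -/
noncomputable def verticalLine (a : F) : Submodule F (Fin 3 → F) :=
  coordLine B ![-a, 1, 0]

lemma isProjLine_lineAtInfinity : IsProjLine F (lineAtInfinity B) :=
  isProjLine_coordLine B (by simp)

lemma isProjLine_affineLine (m c : F) : IsProjLine F (affineLine B m c) :=
  isProjLine_coordLine B (by simp)

lemma isProjLine_verticalLine (a : F) : IsProjLine F (verticalLine B a) :=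
  isProjLine_coordLine B (by simp)

@[simp]
lemma affinePoint_notMem_lineAtInfinity (P : F × F) :
    affinePoint B P ∉ pointsOn (lineAtInfinity B) := by
  simp [affinePoint, lineAtInfinity, coordPoint_mem_coordLine]

@[simp]
lemma slopePoint_mem_lineAtInfinity (m : F) : slopePoint B m ∈ pointsOn (lineAtInfinity B) := by
  simp [slopePoint, lineAtInfinity, coordPoint_mem_coordLine]

@[simp]
lemma verticalPoint_mem_lineAtInfinity : verticalPoint B ∈ pointsOn (lineAtInfinity B) := by
  simp [verticalPoint, lineAtInfinity, coordPoint_mem_coordLine]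

@[simp]
lemma affinePoint_mem_affineLine {P : F × F} {m c : F} :
    affinePoint B P ∈ pointsOn (affineLine B m c) ↔ intercept m P = c := by
  rw [affinePoint, affineLine, coordPoint_mem_coordLine, Matrix.vec3_dotProduct', intercept,
    ← sub_eq_zero (b := c)]
  ring_nf

@[simp]
lemma slopePoint_mem_affineLine {m' m c : F} :
    slopePoint B m' ∈ pointsOn (affineLine B m c) ↔ m' = m := by
  rw [slopePoint, affineLine, coordPoint_mem_coordLine, Matrix.vec3_dotProduct',
    ← sub_eq_zero (b := m)]
  ring_nf

@[simp]
lemma verticalPoint_notMem_affineLine (m c : F) :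
    verticalPoint B ∉ pointsOn (affineLine B m c) := by
  simp [verticalPoint, affineLine, coordPoint_mem_coordLine]

@[simp]
lemma affinePoint_mem_verticalLine {P : F × F} {a : F} :
    affinePoint B P ∈ pointsOn (verticalLine B a) ↔ P.1 = a := by
  rw [affinePoint, verticalLine, coordPoint_mem_coordLine, Matrix.vec3_dotProduct',
    ← sub_eq_zero (b := a)]
  ring_nf

@[simp]
lemma slopePoint_notMem_verticalLine (m a : F) :
    slopePoint B m ∉ pointsOn (verticalLine B a) := by
  simp [slopePoint, verticalLine, coordPoint_mem_coordLine]

@[simp]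
lemma verticalPoint_mem_verticalLine (a : F) :
    verticalPoint B ∈ pointsOn (verticalLine B a) := by
  simp [verticalPoint, verticalLine, coordPoint_mem_coordLine]

lemma affinePoint_injective : Function.Injective (affinePoint B) := by
  intro P Q h
  have hfst : P.1 = Q.1 := by
    rw [← affinePoint_mem_verticalLine B, h, affinePoint_mem_verticalLine]
  have hsnd : intercept 0 P = intercept 0 Q := by
    rw [← affinePoint_mem_affineLine B, h, affinePoint_mem_affineLine]
  exact Prod.ext hfst (by simpa [intercept] using hsnd)

lemma slopePoint_injective : Function.Injective (slopePoint B) := by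
  intro m m' h
  rw [← slopePoint_mem_affineLine B (c := 0), h, slopePoint_mem_affineLine]

lemma slopePoint_ne_verticalPoint (m : F) : slopePoint B m ≠ verticalPoint B := by
  intro h
  exact slopePoint_notMem_verticalLine B m 0 (h ▸ verticalPoint_mem_verticalLine B 0)

lemma point_cases (P : PGPoint F) :
    (∃ Q, P = affinePoint B Q) ∨ (∃ m, P = slopePoint B m) ∨ P = verticalPoint B := by
  obtain ⟨v, hv, rfl⟩ : ∃ v, ∃ hv : v ≠ 0, P = coordPoint B v hv :=
    ⟨B.equivFun P.rep, by simpa using P.rep_nonzero, by simp [coordPoint]⟩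
  by_cases h0 : v 0 = 0
  · right
    by_cases h1 : v 1 = 0
    · refine Or.inr ((coordPoint_eq_iff B _ _).mpr ⟨v 2, ?_⟩)
      ext i; fin_cases i <;> simp [h0, h1]
    · refine Or.inl ⟨v 2 / v 1, (coordPoint_eq_iff B _ _).mpr ⟨v 1, ?_⟩⟩
      ext i; fin_cases i <;> simp [h0, mul_div_cancel₀, h1]
  · refine Or.inl ⟨(v 1 / v 0, v 2 / v 0), (coordPoint_eq_iff B _ _).mpr ⟨v 0, ?_⟩⟩
    ext i; fin_cases i <;> simp [mul_div_cancel₀, h0]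

lemma range_affinePoint : Set.range (affinePoint B) = (pointsOn (lineAtInfinity B))ᶜ := by
  ext P
  rcases point_cases B P with ⟨Q, rfl⟩ | ⟨m, rfl⟩ | rfl
  · simp
  · refine iff_of_false ?_ (not_not_intro (slopePoint_mem_lineAtInfinity B m))
    rintro ⟨Q, hQ⟩
    exact affinePoint_notMem_lineAtInfinity B Q (hQ ▸ slopePoint_mem_lineAtInfinity B m)
  · refine iff_of_false ?_ (not_not_intro (verticalPoint_mem_lineAtInfinity B))
    rintro ⟨Q, hQ⟩
    exact affinePoint_notMem_lineAtInfinity B Q (hQ ▸ verticalPoint_mem_lineAtInfinity B)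

lemma range_slopePoint :
    Set.range (slopePoint B) = pointsOn (lineAtInfinity B) \ {verticalPoint B} := by
  ext P
  rcases point_cases B P with ⟨Q, rfl⟩ | ⟨m, rfl⟩ | rfl
  · refine iff_of_false ?_ fun h => affinePoint_notMem_lineAtInfinity B Q h.1
    rintro ⟨m, hm⟩
    exact affinePoint_notMem_lineAtInfinity B Q (hm ▸ slopePoint_mem_lineAtInfinity B m)
  · simp [slopePoint_ne_verticalPoint]
  · simp [slopePoint_ne_verticalPoint]

variable {B} in
lemma lineAtInfinity_eq {L : Submodule F (Fin 3 → F)} (hL : IsProjLine F L) (h₁ : B 1 ∈ L)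
    (h₂ : B 2 ∈ L) : lineAtInfinity B = L := by
  refine Submodule.eq_of_le_of_finrank_eq (fun x hx => ?_)
    ((isProjLine_lineAtInfinity B).trans hL.symm)
  have hx0 : B.equivFun x 0 = 0 := by
    simpa [dotProduct, Fin.sum_univ_three] using (mem_coordLine B).mp hx
  rw [← B.sum_equivFun x, Fin.sum_univ_three, hx0, zero_smul, zero_add]
  exact L.add_mem (L.smul_mem _ h₁) (L.smul_mem _ h₂)

lemma verticalPoint_eq_mk : verticalPoint B = Projectivization.mk F (B 2) (B.ne_zero 2) := by
  rw [verticalPoint, coordPoint]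
  congr 1
  simp [Module.Basis.equivFun_symm_apply, Fin.sum_univ_three]

lemma exists_lineAtInfinity_eq_verticalPoint_eq {L : Submodule F (Fin 3 → F)}
    (hL : IsProjLine F L) {P : PGPoint F} (hP : P ∈ pointsOn L) :
    ∃ B : Module.Basis (Fin 3) F (Fin 3 → F), lineAtInfinity B = L ∧ verticalPoint B = P := by
  have hPL : P.rep ∈ L := by
    rwa [pointsOn, Set.mem_ofPred_eq, Projectivization.submodule_eq,
      Submodule.span_singleton_le_iff_mem] at hP
  have hlin : LinearIndependent F ![(⟨P.rep, hPL⟩ : L)] :=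
    LinearIndependent.of_subsingleton 0 fun h => P.rep_nonzero (congrArg Subtype.val h)
  obtain ⟨e, he⟩ := exists_linearIndependent_cons_of_lt_finrank hlin
    (Nat.one_lt_two.trans_eq hL.symm)
  obtain ⟨z, hz⟩ := exists_linearIndependent_cons_of_lt_finrank (he.map' L.subtype L.ker_subtype)
    (by simp)
  let B := basisOfLinearIndependentOfCardEqFinrank hz (by simp)
  have hB : ⇑B = _ := coe_basisOfLinearIndependentOfCardEqFinrank hz _
  have hB₁ : B 1 = e := by rw [hB]; rfl
  have hB₂ : B 2 = P.rep := by rw [hB]; rfl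
  refine ⟨B, lineAtInfinity_eq hL (hB₁ ▸ e.2) (hB₂ ▸ hPL), ?_⟩
  rw [verticalPoint_eq_mk, ← P.mk_rep]
  congr 1

section Finite

variable [Finite F] (S : Set (PGPoint F))

/-- The affine points of `S`. -/
noncomputable def affinePart : Finset (F × F) :=
  (Set.toFinite (affinePoint B ⁻¹' S)).toFinset

/-- The slopes of the points of `S` at infinity, `verticalPoint B` excepted. -/
noncomputable def slopes : Finset F :=
  (Set.toFinite (slopePoint B ⁻¹' S)).toFinset

variable {S}

@[simp]
lemma mem_affinePart {P : F × F} : P ∈ affinePart B S ↔ affinePoint B P ∈ S := by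
  simp [affinePart]

@[simp]
lemma mem_slopes {m : F} : m ∈ slopes B S ↔ slopePoint B m ∈ S := by
  simp [slopes]

variable (S)

lemma card_affinePart : (affinePart B S).card = (S \ pointsOn (lineAtInfinity B)).ncard := by
  rw [affinePart, ← Set.ncard_eq_toFinset_card, ← Set.ncard_image_of_injective _
    (affinePoint_injective B), Set.image_preimage_eq_inter_range, range_affinePoint, Set.sdiff_eq]

lemma card_slopes :
    (slopes B S).card = ((S ∩ pointsOn (lineAtInfinity B)) \ {verticalPoint B}).ncard := by
  rw [slopes, ← Set.ncard_eq_toFinset_card, ← Set.ncard_image_of_injective _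
    (slopePoint_injective B), Set.image_preimage_eq_inter_range, range_slopePoint,
    Set.inter_sdiff_assoc]

end Finite

variable {B} in
lemma NoTangents.surjOn_intercept_affinePart [Finite F] {S : Set (PGPoint F)} (hS : NoTangents S)
    {m : F} (hm : slopePoint B m ∈ S) : Set.SurjOn (intercept m) (affinePart B S) Set.univ := by
  intro c _
  obtain ⟨Q, hQS, hQ, hne⟩ := hS.exists_ne (isProjLine_affineLine B m c) hm (by simp)
  rcases point_cases B Q with ⟨P, rfl⟩ | ⟨m', rfl⟩ | rfl
  · exact ⟨P, by simpa using hQS, by simpa using hQ⟩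
  · exact absurd (congrArg _ ((slopePoint_mem_affineLine B).mp hQ)) hne
  · exact absurd hQ (verticalPoint_notMem_affineLine B m c)

variable {B} in
lemma NoTangents.isAffineSWT [Finite F] {S : Set (PGPoint F)} (hS : NoTangents S)
    (hvert : verticalPoint B ∉ S) : IsAffineSWT (affinePart B S) (slopes B S) where
  surjOn m hm := hS.surjOn_intercept_affinePart ((mem_slopes B).mp hm)
  exists_ne_intercept_eq m hm P hP := by
    obtain ⟨R, hRS, hR, hne⟩ := hS.exists_ne (isProjLine_affineLine B m (intercept m P))
      ((mem_affinePart B).mp hP) (by simp)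
    rcases point_cases B R with ⟨Q, rfl⟩ | ⟨m', rfl⟩ | rfl
    · exact ⟨Q, by simpa using hRS, fun h => hne (congrArg _ h), by simpa using hR⟩
    · obtain rfl := (slopePoint_mem_affineLine B).mp hR
      exact absurd ((mem_slopes B).mpr hRS) hm
    · exact absurd hRS hvert
  exists_ne_fst_eq P hP := by
    obtain ⟨R, hRS, hR, hne⟩ := hS.exists_ne (isProjLine_verticalLine B P.1)
      ((mem_affinePart B).mp hP) (by simp)
    rcases point_cases B R with ⟨Q, rfl⟩ | ⟨m, rfl⟩ | rfl
    · exact ⟨Q, by simpa using hRS, fun h => hne (congrArg _ h), by simpa using hR⟩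
    · exact absurd hR (slopePoint_notMem_verticalLine B m P.1)
    · exact absurd hRS hvert

variable {B} in
lemma isTrivialSWT_of_slopes_eq_univ [Fintype F] {S : Set (PGPoint F)}
    (hvert : verticalPoint B ∉ S) (hslopes : slopes B S = Finset.univ) {a : F}
    (haff : affinePart B S = {a} ×ˢ Finset.univ) : IsTrivialSWT S := by
  refine ⟨lineAtInfinity B, verticalLine B a, isProjLine_lineAtInfinity B,
    isProjLine_verticalLine B a, fun h => ?_, ?_⟩
  · exact slopePoint_notMem_verticalLine B 0 a (h ▸ slopePoint_mem_lineAtInfinity B 0)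
  · ext P
    rcases point_cases B P with ⟨Q, rfl⟩ | ⟨m, rfl⟩ | rfl
    · rw [← mem_affinePart, haff, Finset.mem_product, Finset.mem_singleton]
      simp
    · rw [← mem_slopes, hslopes]
      simp
    · simp [hvert]

end Coordinates

lemma NoTangents.not_pointsOn_subset [Fintype F] {S : Set (PGPoint F)} (hS : NoTangents S)
    (hsize : S.ncard ≤ 2 * Fintype.card F) {L : Submodule F (Fin 3 → F)} (hL : IsProjLine F L) :
    ¬ pointsOn L ⊆ S := by
  intro hLS
  have hLne : L ≠ ⊥ := Submodule.one_le_finrank_iff.mp (one_le_two.trans_eq hL.symm)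
  obtain ⟨v, hvL, hv⟩ := L.exists_mem_ne_zero_of_ne_bot hLne
  have hP : Projectivization.mk F v hv ∈ pointsOn L := by
    rwa [pointsOn, Set.mem_ofPred_eq, Projectivization.submodule_mk,
      Submodule.span_singleton_le_iff_mem]
  obtain ⟨B, rfl, -⟩ := exists_lineAtInfinity_eq_verticalPoint_eq hL hP
  have haff : Fintype.card F ≤ (affinePart B S).card :=
    Finset.card_le_card_of_surjOn (intercept 0)
      (by simpa using hS.surjOn_intercept_affinePart (hLS (slopePoint_mem_lineAtInfinity B 0)))
  have hslopes : slopes B S = Finset.univ :=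
    Finset.eq_univ_iff_forall.mpr fun m =>
      (mem_slopes B).mpr (hLS (slopePoint_mem_lineAtInfinity B m))
  have hvert : verticalPoint B ∈ S ∩ pointsOn (lineAtInfinity B) :=
    ⟨hLS (verticalPoint_mem_lineAtInfinity B), verticalPoint_mem_lineAtInfinity B⟩
  have hinf := card_slopes B S
  rw [hslopes, Finset.card_univ] at hinf
  have := Set.ncard_sdiff_singleton_add_one hvert
  have := card_affinePart B S
  have := Set.ncard_inter_add_ncard_sdiff_eq_ncard S (pointsOn (lineAtInfinity B))
  omega

theorem stmt_7_general [Fintype F] {p : ℕ} [CharP F p] {S : Set (PGPoint F)} (hne : S.Nonempty)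
    (hS : NoTangents S) (hsize : S.ncard ≤ 2 * Fintype.card F) {L : Submodule F (Fin 3 → F)}
    (hL : IsProjLine F L)
    (hq : 2 * S.ncard ≤ 4 * (S ∩ pointsOn L).ncard + Fintype.card F)
    (hp : S.ncard < 2 * (S ∩ pointsOn L).ncard + p) : IsTrivialSWT S := by
  obtain ⟨P, hPL, hPS⟩ := Set.not_subset.mp (hS.not_pointsOn_subset hsize hL)
  obtain ⟨B, rfl, rfl⟩ := exists_lineAtInfinity_eq_verticalPoint_eq hL hPL
  have hU := card_affinePart B S
  have hA := card_slopes B S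
  rw [Set.sdiff_singleton_eq_self fun h => hPS h.1] at hA
  have hsum := Set.ncard_inter_add_ncard_sdiff_eq_ncard S (pointsOn (lineAtInfinity B))
  have hpos : 0 < S.ncard := hne.ncard_pos
  obtain ⟨hslopes, a, haff⟩ := (hS.isAffineSWT hPS).eq_univ_and_eq_vertical_line (p := p)
    (by simp only [← Finset.card_pos]; omega) (by omega) (by omega) (by omega)
  exact isTrivialSWT_of_slopes_eq_univ hPS hslopes haff

/-- a non-empty set without tangents `S` in `PG(2,p)` with
`|S| ≤ 2p` having a line with `x` points of `S` where `4x ≥ 2|S| - (p-1)`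
is trivial. -/
theorem stmt_7 [Fintype F] (p : ℕ) (hp : p.Prime) (hcard : Fintype.card F = p)
    (S : Set (PGPoint F)) (hne : S.Nonempty) (hS : NoTangents S)
    (hsize : S.ncard ≤ 2 * p)
    (L : Submodule F (Fin 3 → F)) (hL : IsProjLine F L) (x : ℕ)
    (hx : (S ∩ pointsOn L).ncard = x)
    (hbig : 2 * S.ncard ≤ 4 * x + (p - 1)) :
    IsTrivialSWT S := by
  have : Fact p.Prime := ⟨hp⟩
  have : CharP F p := charP_of_card_eq_prime hcard
  have := hp.pos
  exact stmt_7_general (p := p) hne hS (by omega) hL (by omega) (by omega)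
end
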